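/- arXiv:2008.01121 — 4 statements merged into one kernel-verified Lean document; each statement's English description precedes it below -/
import Mathlib

section
/- Let H⁺ = {x ∈ V : ⟨y,x⟩ ≥ a} be a closed half-space (y ∈ V, a ∈ ℝ), and let 𝒫 be any family of polyhedra in V. Then the function i_{H⁺} : 𝒫 → ℤ defined by i_{H⁺}(P) = 1 if P ⊆ H⁺ and i_{H⁺}(P) = 0 otherwise is valuative. -/
/-!
The proof rests on the Euler characteristic of compact convex sets: if `∑ aᵢ 1_{Kᵢ} = 0` with all
`Kᵢ` compact and convex, then `∑ aᵢ [Kᵢ ≠ ∅] = 0` (`sum_nonempty_eq_zero`). This is proved by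
slicing. Fix a linear functional `ℓ`. By induction, applied to the slices `Kᵢ ∩ {ℓ = t}`, the
function `∑ aᵢ 1_{ℓ(Kᵢ)}` vanishes on `ℝ`, and each `ℓ(Kᵢ)` is a compact interval `[cᵢ, dᵢ]` or
empty. In dimension one, summing the jumps `f(t) - f(t + δ)` over all right endpoints `t`, for `δ`
small, counts every nonempty interval exactly once (`sum_Icc_eq_zero`).

For polyhedra `Pᵢ`, take a large closed ball `B` and `b < a` close to `a`. As `Pᵢ ≠ ∅`,
`[Pᵢ ⊆ H⁺] = [Pᵢ ∩ B ≠ ∅] - [Pᵢ ∩ B ∩ {⟪y, ·⟫ ≤ b} ≠ ∅]`, and both terms on the right are covered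
by the compact convex case.
-/

open RealInnerProductSpace

/-- The indicator function of a set `P`, valued in `ℤ`. -/
noncomputable def indic {V : Type*} (P : Set V) : V → ℤ := P.indicator 1

/-- `iv p` is `1` if the proposition `p` holds and `0` otherwise. -/
noncomputable def iv (p : Prop) : ℤ := @ite _ p (Classical.propDecidable p) 1 0

/-- Valuative functions on a family of subsets of `V`. -/
def Valuative {V A : Type*} [AddCommGroup A] (Fam : Set (Set V)) (f : Set V → A) : Prop :=
  ∀ (k : ℕ) (a : Fin k → ℤ) (P : Fin k → Set V),
    (∀ i, P i ∈ Fam) → (∑ i, a i • indic (P i)) = 0 → (∑ i, a i • f (P i)) = 0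

variable {V : Type*} [NormedAddCommGroup V] [InnerProductSpace ℝ V] [FiniteDimensional ℝ V]

/-- A polyhedron: a nonempty finite intersection of closed half-spaces. -/
def IsPolyhedron (P : Set V) : Prop :=
  P.Nonempty ∧ ∃ s : Finset (V × ℝ), P = {x | ∀ p ∈ s, ⟪p.1, x⟫ ≤ p.2}

lemma iv_pos {p : Prop} (h : p) : iv p = 1 := by simp [iv, h]

lemma iv_neg {p : Prop} (h : ¬ p) : iv p = 0 := by simp [iv, h]

lemma iv_and (p q : Prop) : iv (p ∧ q) = iv p * iv q := by
  by_cases hp : p <;> by_cases hq : q <;> simp [iv, hp, hq]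

/-- The one-dimensional case. Intervals with `d i < c i` are allowed and stand for the empty set. -/
lemma sum_Icc_eq_zero {k : ℕ} (a : Fin k → ℤ) (c d : Fin k → ℝ)
    (h : ∀ t, ∑ i, a i * iv (t ∈ Set.Icc (c i) (d i)) = 0) :
    ∑ i, a i * iv (c i ≤ d i) = 0 := by
  classical
  -- `δ` is smaller than every positive gap from a right endpoint to another endpoint.
  obtain ⟨δ, hδ, hδ0⟩ : ∃ δ : ℝ, (∀ i j, (d i < c j → δ < c j - d i) ∧
      (d i < d j → δ < d j - d i)) ∧ 0 < δ := by
    have key : ∀ u v : ℝ, ∀ᶠ δ : ℝ in nhdsWithin 0 (Set.Ioi 0), (u < v → δ < v - u) := by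
      intro u v
      by_cases huv : u < v
      · filter_upwards [mem_nhdsWithin_of_mem_nhds (Iio_mem_nhds (sub_pos.2 huv))] with δ h _
        exact h
      · exact Filter.Eventually.of_forall fun _ h => absurd h huv
    have h1 : ∀ᶠ δ : ℝ in nhdsWithin 0 (Set.Ioi 0), ∀ i j, (d i < c j → δ < c j - d i) ∧
        (d i < d j → δ < d j - d i) :=
      Filter.eventually_all.2 fun i => Filter.eventually_all.2 fun j =>
        (key _ _).and (key _ _)
    exact (h1.and self_mem_nhdsWithin).exists
  have count : ∀ i, iv (c i ≤ d i) = ∑ t ∈ Finset.univ.image d,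
      (iv (t ∈ Set.Icc (c i) (d i)) - iv (t + δ ∈ Set.Icc (c i) (d i))) := by
    intro i
    rw [Finset.sum_eq_single (d i)]
    · rw [iv_neg (p := d i + δ ∈ _) (fun h => by have := h.2; linarith)]
      by_cases hi : c i ≤ d i
      · rw [iv_pos hi, iv_pos ⟨hi, le_rfl⟩]; rfl
      · rw [iv_neg hi, iv_neg fun h => hi h.1]; rfl
    · intro t ht hne
      obtain ⟨j, -, rfl⟩ := Finset.mem_image.1 ht
      have hiff : d j ∈ Set.Icc (c i) (d i) ↔ d j + δ ∈ Set.Icc (c i) (d i) := by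
        obtain ⟨h1, h2⟩ := hδ j i
        constructor
        · rintro ⟨h3, h4⟩
          have := h2 (lt_of_le_of_ne h4 hne)
          exact ⟨by linarith, by linarith⟩
        · rintro ⟨h3, h4⟩
          refine ⟨?_, by linarith⟩
          by_contra! h5
          have := h1 h5
          linarith
      rw [hiff, sub_self]
    · intro hn
      exact absurd (Finset.mem_image_of_mem d (Finset.mem_univ i)) hn
  simp_rw [count, Finset.mul_sum]
  rw [Finset.sum_comm]
  refine Finset.sum_eq_zero fun t _ => ?_
  simp_rw [mul_sub, Finset.sum_sub_distrib, h, sub_self]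

lemma exists_eq_Icc {J : Set ℝ} (hc : IsCompact J) (hv : Convex ℝ J) :
    ∃ c d, J = Set.Icc c d := by
  rcases J.eq_empty_or_nonempty with rfl | hne
  · exact ⟨1, 0, by simp⟩
  · exact ⟨_, _, eq_Icc_of_connected_compact ⟨hne, hv.isPreconnected⟩ hc⟩

/-- The slicing induction, on a list of functionals that separates the points of the union of
the sets. -/
lemma sum_nonempty_aux {W : Type*} [NormedAddCommGroup W] [NormedSpace ℝ W] {k : ℕ}
    (a : Fin k → ℤ) (L : List (W →L[ℝ] ℝ)) :
    ∀ K : Fin k → Set W, (∀ i, IsCompact (K i)) → (∀ i, Convex ℝ (K i)) →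
      (∀ i j, ∀ x ∈ K i, ∀ z ∈ K j, (∀ l ∈ L, l x = l z) → x = z) →
      (∀ x, ∑ i, a i * iv (x ∈ K i) = 0) → ∑ i, a i * iv (K i).Nonempty = 0 := by
  induction L with
  | nil =>
    intro K _ _ hsep hsum
    by_cases hne : ∃ i, (K i).Nonempty
    · -- All nonempty `K j` equal the same singleton `{x}`.
      obtain ⟨i, x, hx⟩ := hne
      rw [← hsum x]
      refine Finset.sum_congr rfl fun j _ => ?_
      congr 2
      refine propext ⟨?_, fun h => ⟨x, h⟩⟩
      rintro ⟨z, hz⟩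
      rwa [hsep i j x hx z hz (by simp)]
    · push Not at hne
      exact Finset.sum_eq_zero fun j _ => by rw [iv_neg (by simp [hne j]), mul_zero]
  | cons l L ih =>
    intro K hcomp hconv hsep hsum
    have slice : ∀ t, ∑ i, a i * iv (t ∈ l '' K i) = 0 := by
      intro t
      refine ih (fun i => K i ∩ {x | l x = t})
        (fun i => (hcomp i).inter_right (isClosed_eq l.continuous continuous_const))
        (fun i => (hconv i).inter ((convex_singleton t).linear_preimage l.toLinearMap)) ?_ ?_
      · rintro i j x ⟨hx, hxt⟩ z ⟨hz, hzt⟩ hL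
        refine hsep i j x hx z hz fun l' hl' => ?_
        rcases List.mem_cons.1 hl' with rfl | h
        · exact hxt.trans hzt.symm
        · exact hL l' h
      · intro x
        have : ∀ i, iv (x ∈ K i ∩ {x | l x = t}) = iv (x ∈ K i) * iv (l x = t) :=
          fun i => iv_and _ _
        simp_rw [this, ← mul_assoc, ← Finset.sum_mul, hsum, zero_mul]
    choose c d hcd using fun i => exists_eq_Icc ((hcomp i).image l.continuous)
      ((hconv i).linear_image l.toLinearMap)
    have h1 := sum_Icc_eq_zero a c d (by
      intro t
      simp_rw [← hcd]
      exact slice t)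
    rw [← h1]
    refine Finset.sum_congr rfl fun i _ => ?_
    rw [← Set.nonempty_Icc, ← hcd]
    congr 2
    exact propext Set.image_nonempty.symm

/-- Nonemptiness is a valuative function on compact convex sets. -/
lemma sum_nonempty_eq_zero {k : ℕ}
    (a : Fin k → ℤ) (K : Fin k → Set V) (hcomp : ∀ i, IsCompact (K i))
    (hconv : ∀ i, Convex ℝ (K i)) (hsum : ∀ x, ∑ i, a i * iv (x ∈ K i) = 0) :
    ∑ i, a i * iv (K i).Nonempty = 0 := by
  let b := Module.finBasis ℝ V
  refine sum_nonempty_aux a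
    (List.ofFn fun j => LinearMap.toContinuousLinearMap (b.coord j)) K hcomp hconv ?_ hsum
  intro i j x _ z _ h
  refine b.ext_elem fun m => ?_
  exact h _ (List.mem_ofFn.2 ⟨m, rfl⟩)

lemma IsPolyhedron.isClosed_and_convex {P : Set V} (hP : IsPolyhedron P) :
    IsClosed P ∧ Convex ℝ P := by
  obtain ⟨-, s, rfl⟩ := hP
  simp only [Set.ofPred_forall]
  constructor
  · exact isClosed_biInter fun p _ =>
      isClosed_le (continuous_const.inner continuous_id) continuous_const
  · exact convex_iInter₂ fun p _ => convex_halfSpace_le (innerₛₗ ℝ p.1).isLinear p.2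

/-- containment in a closed half-space `{x | a ≤ ⟪y, x⟫}` is a valuative
function on any family of polyhedra. -/
theorem halfspace_containment_valuative (Fam : Set (Set V)) (hFam : ∀ P ∈ Fam, IsPolyhedron P)
    (y : V) (a : ℝ) :
    Valuative Fam (fun P => iv (P ⊆ {x : V | a ≤ ⟪y, x⟫})) := by
  intro k m P hP hsum
  have hpt : ∀ x, ∑ i, m i * iv (x ∈ P i) = 0 := by
    intro x
    have := congrFun hsum x
    have hind : ∀ i, indic (P i) x = iv (x ∈ P i) := fun i => by
      by_cases hx : x ∈ P i <;> simp [indic, iv, hx]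
    simpa only [Finset.sum_apply, Pi.smul_apply, Pi.zero_apply, smul_eq_mul, hind] using this
  -- `z i ∈ P i`, chosen outside the half-space whenever `P i` is not contained in it.
  have hz : ∀ i, ∃ z ∈ P i, ¬ (P i ⊆ {x : V | a ≤ ⟪y, x⟫}) → ⟪y, z⟫ < a := by
    intro i
    by_cases hi : P i ⊆ {x : V | a ≤ ⟪y, x⟫}
    · obtain ⟨z, hz⟩ := (hFam _ (hP i)).1
      exact ⟨z, hz, fun h => absurd hi h⟩
    · obtain ⟨z, hz, hza⟩ := Set.not_subset.1 hi
      exact ⟨z, hz, fun _ => not_le.1 hza⟩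
  choose z hzP hza using hz
  obtain ⟨b, hb, hba⟩ : ∃ b, (∀ i, ¬ (P i ⊆ {x : V | a ≤ ⟪y, x⟫}) → ⟪y, z i⟫ ≤ b) ∧ b < a := by
    have h1 : ∀ᶠ b in nhdsWithin a (Set.Iio a),
        ∀ i, ¬ (P i ⊆ {x : V | a ≤ ⟪y, x⟫}) → ⟪y, z i⟫ ≤ b := by
      refine Filter.eventually_all.2 fun i => ?_
      by_cases hi : P i ⊆ {x : V | a ≤ ⟪y, x⟫}
      · exact Filter.Eventually.of_forall fun _ h => absurd hi h
      · filter_upwards [mem_nhdsWithin_of_mem_nhds (Ioi_mem_nhds (hza i hi))] with b h _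
        exact le_of_lt h
    exact (h1.and self_mem_nhdsWithin).exists
  let B : Set V := Metric.closedBall 0 (∑ i, ‖z i‖)
  have hzB : ∀ i, z i ∈ B := fun i => mem_closedBall_zero_iff.2
    (Finset.single_le_sum (f := fun i => ‖z i‖) (fun _ _ => norm_nonneg _) (Finset.mem_univ i))
  have euler : ∀ C : Set V, IsClosed C → Convex ℝ C →
      ∑ i, m i * iv (P i ∩ (B ∩ C)).Nonempty = 0 := by
    intro C hC hC'
    refine sum_nonempty_eq_zero m _ (fun i => ?_) (fun i => ?_) fun x => ?_
    · exact ((isCompact_closedBall _ _).inter_right hC).inter_left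
        (hFam _ (hP i)).isClosed_and_convex.1
    · exact (hFam _ (hP i)).isClosed_and_convex.2.inter ((convex_closedBall _ _).inter hC')
    · have : ∀ i, iv (x ∈ P i ∩ (B ∩ C)) = iv (x ∈ P i) * iv (x ∈ B ∩ C) :=
        fun i => iv_and _ _
      simp_rw [this, ← mul_assoc, ← Finset.sum_mul, hpt, zero_mul]
  have e1 := euler Set.univ isClosed_univ convex_univ
  have e2 := euler {x | ⟪y, x⟫ ≤ b}
    (isClosed_le (continuous_const.inner continuous_id) continuous_const)
    (convex_halfSpace_le (innerₛₗ ℝ y).isLinear b)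
  have key : ∀ i, iv (P i ⊆ {x : V | a ≤ ⟪y, x⟫}) =
      iv (P i ∩ (B ∩ Set.univ)).Nonempty - iv (P i ∩ (B ∩ {x | ⟪y, x⟫ ≤ b})).Nonempty := by
    intro i
    rw [iv_pos (p := (P i ∩ (B ∩ Set.univ)).Nonempty) ⟨z i, hzP i, hzB i, trivial⟩]
    by_cases hi : P i ⊆ {x : V | a ≤ ⟪y, x⟫}
    · rw [iv_pos hi, iv_neg]
      · rfl
      · rintro ⟨x, hx, -, hxb⟩
        have h1 : a ≤ ⟪y, x⟫ := hi hx
        have h2 : ⟪y, x⟫ ≤ b := hxb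
        linarith
    · rw [iv_neg hi, iv_pos ⟨z i, hzP i, hzB i, hb i hi⟩]
      rfl
  simp only [smul_eq_mul, key, mul_sub, Finset.sum_sub_distrib, e1, e2, sub_self]
end

section
/- Let Q be a polyhedron in V, F a face of Q, and v ∈ V. Let y ∈ V be such that the supremum of ⟨y,·⟩ over Q is attained exactly on F, and set H := {x ∈ V : ⟨y,x⟩ = ⟨y,v⟩} and H⁻ := {x ∈ V : ⟨y,x⟩ ≤ ⟨y,v⟩}. Then for every P ∈ Def⁺(Q), the translate C_F(Q) + v tightly contains P if and only if P ⊆ H⁻, P ∩ H ≠ ∅, and P ∩ H ⊆ lineal(C_F(Q)) + v. -/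
/-!
Write `C` for the tangent cone of `Q` at `F` and `N` for the normal cone. Choosing `x₀ ∈ F` at which
only those inequalities of `Q` are tight that are tight on all of `F` (`exists_generic_mem`), every
direction `d` that pairs nonpositively with `N` satisfies `x₀ + ε d ∈ Q` for some `ε > 0`
(`exists_feasible_step`). Hence `C` is exactly the polar of `N`, with no closedness argument needed.

Forward direction: `y ∈ N`, so `y ≤ 0` on `C` and `y = 0` on its lineality space. If `d ∈ C` and
`⟪y, d⟫ = 0`, then `x₀ + ε d ∈ Q` still maximizes `y`, so it lies in `F` and `-d ∈ C`.

Backward direction: `G = P ∩ H` is the face of `P` maximizing `y`. As `P` is an extended deformation,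
`y` lies in some `N_{G'}(Q) ⊆ N_G(P)`; then `G' ⊆ F`, so `N ⊆ N_{G'}(Q) ⊆ N_G(P)`. Thus `P - g` lies
in the polar of `N`, which is `C`, for every `g ∈ G`, and `g - v` lies in the lineality space of `C`.
-/


open RealInnerProductSpace

variable {V : Type*} [NormedAddCommGroup V] [InnerProductSpace ℝ V] [FiniteDimensional ℝ V]

def IsFace (Q F : Set V) : Prop :=
  ∃ y : V, F.Nonempty ∧ F = {x | x ∈ Q ∧ ∀ q ∈ Q, ⟪y, q⟫ ≤ ⟪y, x⟫}

def IsConvexCone (C : Set V) : Prop :=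
  (0 : V) ∈ C ∧ Convex ℝ C ∧ ∀ c : ℝ, 0 ≤ c → ∀ x ∈ C, c • x ∈ C

def coneGen (S : Set V) : Set V := ⋂₀ {C : Set V | IsConvexCone C ∧ S ⊆ C}

def tanCone (Q F : Set V) : Set V := coneGen {d | ∃ q ∈ Q, ∃ v ∈ F, d = q - v}

def normCone (Q F : Set V) : Set V := {y | ∀ v ∈ F, ∀ q ∈ Q, ⟪y, q⟫ ≤ ⟪y, v⟫}

def IsExtDef (Q P : Set V) : Prop :=
  IsPolyhedron P ∧ ∀ F : Set V, IsFace P F → ∃ 𝒢 : Set (Set V),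
    (∀ G ∈ 𝒢, IsFace Q G) ∧ normCone P F = ⋃ G ∈ 𝒢, normCone Q G

def lineal (C : Set V) : Set V := C ∩ (-C)

def transl (v : V) (C : Set V) : Set V := (fun x => v + x) '' C

def TightContains (C : Set V) (v : V) (P : Set V) : Prop :=
  P ⊆ transl v C ∧ (P ∩ transl v (lineal C)).Nonempty

lemma sub_mem_tanCone {Q F : Set V} {q x : V} (hq : q ∈ Q) (hx : x ∈ F) :
    q - x ∈ tanCone Q F := by
  rintro C ⟨_, hC⟩
  exact hC ⟨q, hq, x, hx, rfl⟩

lemma smul_mem_tanCone {Q F : Set V} {d : V} {c : ℝ} (hc : 0 ≤ c) (hd : d ∈ tanCone Q F) :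
    c • d ∈ tanCone Q F := by
  intro C hC
  exact hC.1.2.2 c hc d (hd C hC)

lemma add_mem_tanCone {Q F : Set V} {d e : V} (hd : d ∈ tanCone Q F) (he : e ∈ tanCone Q F) :
    d + e ∈ tanCone Q F := by
  intro C hC
  have h := hC.1.2.1 (hd C hC) (he C hC) (by norm_num : (0 : ℝ) ≤ 1 / 2)
    (by norm_num : (0 : ℝ) ≤ 1 / 2) (by norm_num)
  have h2 := hC.1.2.2 2 (by norm_num) _ h
  rw [← smul_add, smul_smul] at h2
  norm_num at h2
  exact h2

lemma inner_nonpos_of_mem_tanCone {Q F : Set V} {d z : V} (hd : d ∈ tanCone Q F)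
    (hz : z ∈ normCone Q F) : ⟪z, d⟫ ≤ 0 := by
  refine hd {d | ⟪z, d⟫ ≤ 0} ⟨⟨?_, ?_, ?_⟩, ?_⟩
  · simp
  · intro a ha b hb s t hs ht _
    simp only [Set.mem_setOf_eq, inner_add_right, inner_smul_right] at *
    nlinarith
  · intro c hc x hx
    simp only [Set.mem_setOf_eq, inner_smul_right] at *
    nlinarith
  · rintro _ ⟨q, hq, x, hx, rfl⟩
    simpa [inner_sub_right] using hz x hx q hq

/-- A convex set satisfying finitely many inequalities has a point at which every inequality
that is not an equality on the whole set is strict. -/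
lemma exists_generic_mem {F : Set V} (hne : F.Nonempty) (hconv : Convex ℝ F)
    (s : Finset (V × ℝ)) (hs : ∀ p ∈ s, ∀ x ∈ F, ⟪p.1, x⟫ ≤ p.2) :
    ∃ x ∈ F, ∀ p ∈ s, (∀ z ∈ F, ⟪p.1, z⟫ = p.2) ∨ ⟪p.1, x⟫ < p.2 := by
  classical
  induction s using Finset.induction_on with
  | empty => exact ⟨hne.some, hne.some_mem, by simp⟩
  | insert p s _ ih =>
    obtain ⟨x, hxF, hx⟩ := ih fun p hp => hs p (Finset.mem_insert_of_mem hp)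
    by_cases hp : ∀ z ∈ F, ⟪p.1, z⟫ = p.2
    · refine ⟨x, hxF, fun r hr => ?_⟩
      rcases Finset.mem_insert.1 hr with rfl | hr
      · exact Or.inl hp
      · exact hx r hr
    · push Not at hp
      obtain ⟨z, hzF, hz⟩ := hp
      have hz' := lt_of_le_of_ne (hs p (Finset.mem_insert_self _ _) z hzF) hz
      refine ⟨(1 / 2 : ℝ) • x + (1 / 2 : ℝ) • z,
        hconv hxF hzF (by norm_num) (by norm_num) (by norm_num), fun r hr => ?_⟩
      have hxr := hs r hr x hxF
      have hzr := hs r hr z hzF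
      simp only [inner_add_right, inner_smul_right]
      rcases Finset.mem_insert.1 hr with rfl | hr
      · right; linarith
      · rcases hx r hr with h | h
        · exact Or.inl h
        · right; linarith

/-- From a suitable point of `F`, every direction in the polar of the normal cone can be
followed a positive distance inside `Q`. -/
lemma exists_feasible_step {Q F : Set V} (hQ : IsPolyhedron Q) (hF : IsFace Q F) :
    ∃ x ∈ F, ∀ d, (∀ z ∈ normCone Q F, ⟪z, d⟫ ≤ 0) → ∃ ε : ℝ, 0 < ε ∧ x + ε • d ∈ Q := by
  obtain ⟨_, s, hs⟩ := hQ
  obtain ⟨y, hne, hFy⟩ := hF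
  have hFQ : F ⊆ Q := by rw [hFy]; exact fun x hx => hx.1
  have hQs : ∀ x ∈ Q, ∀ p ∈ s, ⟪p.1, x⟫ ≤ p.2 := fun x hx => by rw [hs] at hx; exact hx
  have hconv : Convex ℝ F := by
    intro a ha b hb t u ht hu htu
    have haQ := hQs a (hFQ ha)
    have hbQ := hQs b (hFQ hb)
    rw [hFy] at ha hb ⊢
    refine ⟨?_, fun q hq => ?_⟩
    · rw [hs]
      intro p hp
      have h1 := mul_le_mul_of_nonneg_left (haQ p hp) ht
      have h2 := mul_le_mul_of_nonneg_left (hbQ p hp) hu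
      simp only [inner_add_right, inner_smul_right]
      calc _ ≤ t * p.2 + u * p.2 := add_le_add h1 h2
        _ = p.2 := by rw [← add_mul, htu, one_mul]
    · have h1 := mul_le_mul_of_nonneg_left (ha.2 q hq) ht
      have h2 := mul_le_mul_of_nonneg_left (hb.2 q hq) hu
      simp only [inner_add_right, inner_smul_right]
      calc ⟪y, q⟫ = t * ⟪y, q⟫ + u * ⟪y, q⟫ := by rw [← add_mul, htu, one_mul]
        _ ≤ _ := add_le_add h1 h2
  obtain ⟨x, hxF, hx⟩ := exists_generic_mem hne hconv s fun p hp z hz => hQs z (hFQ hz) p hp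
  refine ⟨x, hxF, fun d hd => ?_⟩
  have key : ∀ᶠ ε : ℝ in nhdsWithin 0 (Set.Ioi 0), ∀ p ∈ s, ⟪p.1, x + ε • d⟫ ≤ p.2 := by
    rw [Filter.eventually_all_finset]
    intro p hp
    rcases hx p hp with h | h
    · -- The inequality is tight on all of `F`, so its normal vector lies in the normal cone.
      have hpd : ⟪p.1, d⟫ ≤ 0 := hd p.1 fun z hz q hq => by
        rw [h z hz]; exact hQs q hq p hp
      filter_upwards [self_mem_nhdsWithin] with ε hε
      have hε' : (0 : ℝ) < ε := hε
      rw [inner_add_right, inner_smul_right, h x hxF]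
      nlinarith
    · have hc : Continuous fun ε : ℝ => ⟪p.1, x + ε • d⟫ := by fun_prop
      have h0 : ∀ᶠ ε : ℝ in nhds 0, ⟪p.1, x + ε • d⟫ < p.2 :=
        hc.continuousAt.eventually_lt continuousAt_const (by simpa using h)
      exact (h0.filter_mono nhdsWithin_le_nhds).mono fun _ h => h.le
  obtain ⟨ε, h1, h2⟩ := (key.and self_mem_nhdsWithin).exists
  exact ⟨ε, h2, by rw [hs]; exact h1⟩

/-- for an extended deformation `P` of `Q`, tight containment in the translated
tangent cone `C_F(Q) + v` is equivalent to the half-space condition for a functional `y`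
whose supremum over `Q` is attained exactly on the face `F`. -/
theorem tight_containment_iff_halfspace (Q : Set V) (hQ : IsPolyhedron Q)
    (F : Set V) (hF : IsFace Q F) (v y : V) (hne : F.Nonempty)
    (hy : F = {x | x ∈ Q ∧ ∀ q ∈ Q, ⟪y, q⟫ ≤ ⟪y, x⟫})
    (P : Set V) (hP : IsExtDef Q P) :
    TightContains (tanCone Q F) v P ↔
      (P ⊆ {x : V | ⟪y, x⟫ ≤ ⟪y, v⟫} ∧
        (P ∩ {x : V | ⟪y, x⟫ = ⟪y, v⟫}).Nonempty ∧
        P ∩ {x : V | ⟪y, x⟫ = ⟪y, v⟫} ⊆ transl v (lineal (tanCone Q F))) := by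
  obtain ⟨x₀, hx₀F, hx₀⟩ := exists_feasible_step hQ hF
  have hFQ : F ⊆ Q := by rw [hy]; exact fun x hx => hx.1
  have hyN : y ∈ normCone Q F := fun w hw q hq => by rw [hy] at hw; exact hw.2 q hq
  have hinv : ∀ {ε : ℝ} {d : V}, 0 < ε → ε⁻¹ • (ε • d) = d := fun hε => inv_smul_smul₀ hε.ne' _
  constructor
  · rintro ⟨hsub, p₀, hp₀P, c₀, hc₀, rfl⟩
    refine ⟨?_, ⟨_, hp₀P, ?_⟩, ?_⟩
    · intro p hp
      obtain ⟨c, hc, rfl⟩ := hsub hp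
      have := inner_nonpos_of_mem_tanCone hc hyN
      simp only [Set.mem_setOf_eq, inner_add_right]
      linarith
    · have h1 := inner_nonpos_of_mem_tanCone hc₀.1 hyN
      have h2 := inner_nonpos_of_mem_tanCone hc₀.2 hyN
      rw [inner_neg_right] at h2
      simp only [Set.mem_setOf_eq, inner_add_right]
      linarith
    · rintro p ⟨hp, hpH⟩
      obtain ⟨c, hc, rfl⟩ := hsub hp
      simp only [Set.mem_setOf_eq, inner_add_right] at hpH
      have hyc : ⟪y, c⟫ = 0 := by linarith
      obtain ⟨ε, hε, hmem⟩ := hx₀ c fun z hz => inner_nonpos_of_mem_tanCone hc hz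
      -- Moving along `c` does not change `y`, so the moved point is still in `F`.
      have hmemF : x₀ + ε • c ∈ F := by
        rw [hy]
        refine ⟨hmem, fun q hq => ?_⟩
        rw [inner_add_right, inner_smul_right, hyc, mul_zero, add_zero]
        exact hyN x₀ hx₀F q hq
      refine ⟨c, ⟨hc, ?_⟩, rfl⟩
      have h := smul_mem_tanCone (inv_nonneg.2 hε.le) (sub_mem_tanCone (hFQ hx₀F) hmemF)
      rwa [sub_add_cancel_left, smul_neg, hinv hε] at h
  · rintro ⟨hsub, ⟨g, hgP, hgH⟩, hlin⟩
    have hgl := hlin ⟨hgP, hgH⟩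
    refine ⟨?_, g, hgP, hgl⟩
    have hface : IsFace P (P ∩ {x : V | ⟪y, x⟫ = ⟪y, v⟫}) := by
      refine ⟨y, ⟨g, hgP, hgH⟩, ?_⟩
      ext x
      constructor
      · rintro ⟨hxP, hxH⟩
        exact ⟨hxP, fun q hq => (hsub hq).trans_eq (Eq.symm hxH)⟩
      · rintro ⟨hxP, hx⟩
        exact ⟨hxP, le_antisymm (hsub hxP) ((Eq.symm hgH).trans_le (hx g hgP))⟩
    obtain ⟨𝒢, h𝒢, hN⟩ := hP.2 _ hface
    have hyP : y ∈ normCone P (P ∩ {x : V | ⟪y, x⟫ = ⟪y, v⟫}) :=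
      fun w hw q hq => (hsub hq).trans_eq (Eq.symm hw.2)
    rw [hN] at hyP
    simp only [Set.mem_iUnion] at hyP
    obtain ⟨G', hG', hyG'⟩ := hyP
    have hG'F : G' ⊆ F := by
      obtain ⟨y', _, hG'eq⟩ := h𝒢 G' hG'
      intro w hw
      rw [hy]
      exact ⟨by rw [hG'eq] at hw; exact hw.1, hyG' w hw⟩
    intro p hp
    obtain ⟨ε, hε, hmem⟩ := hx₀ (p - g) fun z hz => by
      have hzP : z ∈ normCone P (P ∩ {x : V | ⟪y, x⟫ = ⟪y, v⟫}) := by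
        rw [hN]
        exact Set.mem_biUnion hG' fun w hw => hz w (hG'F hw)
      have := hzP g ⟨hgP, hgH⟩ p hp
      rw [inner_sub_right]
      linarith
    have h := smul_mem_tanCone (inv_nonneg.2 hε.le) (sub_mem_tanCone hmem hx₀F)
    rw [add_sub_cancel_left, hinv hε] at h
    obtain ⟨c, hc, rfl⟩ := hgl
    refine ⟨c + (p - (v + c)), add_mem_tanCone hc.1 h, ?_⟩
    simp only
    abel
end

section
/- Let Q be a polyhedron in V. For every extended deformation P ∈ Def⁺(Q), the indicator function 1_P is a finite ℤ-linear combination of indicator functions 1_{C_F(Q)+v}, where F ranges over faces of Q and v over points of V. -/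
/-!
Write `σ_G` for the normal cone of `Q` at a face `G`. Let `S` be the finite set of faces `G` of `Q`
for which some point of `P` maximises all functionals in `σ_G` over `P`. Since `P` is an extended
deformation of `Q`, the cones `σ_G`, `G ∈ S`, cover exactly the set `D` of functionals attaining
their maximum on `P`. For nonempty `T ⊆ S`, the intersection `σ_T` of the `σ_G`, `G ∈ T`, is again
the normal cone of a face `F_T` of `Q` (`exists_face_normCone_eq`), and some `v_T ∈ P` maximises
every functional in `σ_T`. The identity proved is
`1_P = ∑ (-1)^(|T|+1) • 1_{v_T + C_{F_T}(Q)}`, summed over the nonempty `T ⊆ S`.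

To evaluate it at a point `x`, let `U` be the convex set of functionals separating `x` strictly
from `P`. Then `x ∈ P` iff `U` is empty and, by polarity of tangent and normal cones
(`mem_tanCone_iff`), `x ∈ v_T + C_{F_T}(Q)` iff `σ_T ∩ U` is empty. Every `y ∈ U` is bounded above
on `P`, hence lies in `D` (`max_attained`), so `U` is covered by the `σ_G`. The identity becomes
inclusion-exclusion for the Euler characteristics of the convex sets `σ_T ∩ U` (`euler_cover`),
which rests on the fact that the Euler characteristic is a valuation on compact convex sets
(`euler_relation`), proved by slicing.
-/

open RealInnerProductSpace

variable {V : Type*} [NormedAddCommGroup V] [InnerProductSpace ℝ V] [FiniteDimensional ℝ V]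

set_option linter.unusedSectionVars false

/-! ### The Euler characteristic of compact convex sets -/

open scoped Classical in
/-- The Euler characteristic is a valuation on compact intervals. For each `β`, the coefficients of
the intervals with right endpoint `β` sum to zero, being the jump of the step function
`∑ c i * 1_{K i}` from `β` to the right of `β`. -/
lemma euler_real {ι : Type*} (s : Finset ι) (c : ι → ℤ) (K : ι → Set ℝ)
    (hK : ∀ i ∈ s, IsCompact (K i) ∧ Convex ℝ (K i))
    (h : ∀ t, ∑ i ∈ s, c i * (if t ∈ K i then 1 else 0) = 0) :
    ∑ i ∈ s, c i * (if (K i).Nonempty then 1 else 0) = 0 := by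
  have key : ∀ β : ℝ, ∑ i ∈ s, c i * (if (K i).Nonempty ∧ sSup (K i) = β then 1 else 0) = 0 := by
    intro β
    have ev : ∀ i ∈ s, ∀ᶠ t in nhdsWithin β (Set.Ioi β),
        (t ∈ K i ↔ β ∈ K i ∧ sSup (K i) ≠ β) := by
      intro i hi
      rcases (K i).eq_empty_or_nonempty with h0 | h0
      · simp [h0]
      have hc : IsConnected (K i) := ⟨h0, (hK i hi).2.isPreconnected⟩
      have hI := eq_Icc_of_connected_compact hc (hK i hi).1
      have hab : sInf (K i) ≤ sSup (K i) := by
        rw [hI] at h0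
        simpa using h0
      set a := sInf (K i)
      set b := sSup (K i)
      rw [hI]
      rcases lt_or_ge β a with h1 | h1
      · filter_upwards [nhdsWithin_le_nhds (Iio_mem_nhds h1)] with t ht
        simp only [Set.mem_Iio] at ht
        simp only [Set.mem_Icc]
        constructor
        · intro h; linarith [h.1]
        · intro h; linarith [h.1.1]
      rcases lt_or_ge β b with h2 | h2
      · filter_upwards [nhdsWithin_le_nhds (Iio_mem_nhds h2), self_mem_nhdsWithin] with t ht ht'
        simp only [Set.mem_Iio, Set.mem_Ioi] at ht ht'
        simp only [Set.mem_Icc]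
        exact ⟨fun _ => ⟨⟨h1, h2.le⟩, h2.ne'⟩, fun _ => ⟨by linarith, ht.le⟩⟩
      · filter_upwards [self_mem_nhdsWithin] with t ht'
        simp only [Set.mem_Ioi] at ht'
        simp only [Set.mem_Icc]
        constructor
        · intro h; linarith [h.2]
        · intro h; exact absurd (le_antisymm h2 h.1.2) h.2
    obtain ⟨t, ht⟩ := ((s.eventually_all).2 ev).exists
    have h1 := h β
    have h2 := h t
    refine Eq.trans ?_ (sub_eq_zero.2 (h1.trans h2.symm))
    rw [← Finset.sum_sub_distrib]
    refine Finset.sum_congr rfl fun i hi => ?_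
    rw [← mul_sub]
    congr 1
    have hmem : (K i).Nonempty → sSup (K i) ∈ K i := fun hn => (hK i hi).1.sSup_mem hn
    have hti := ht i hi
    by_cases hb : β ∈ K i
    · have hn : (K i).Nonempty := ⟨β, hb⟩
      by_cases he : sSup (K i) = β <;> simp [hti, hb, he, hn]
    · have : ¬ ((K i).Nonempty ∧ sSup (K i) = β) := by
        rintro ⟨hn, rfl⟩
        exact hb (hmem hn)
      simp [hti, hb, this]
  rw [← Finset.sum_fiberwise_of_maps_to (t := s.image fun i => sSup (K i))
    (g := fun i => sSup (K i)) (fun i hi => Finset.mem_image_of_mem _ hi)]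
  refine Finset.sum_eq_zero fun β _ => ?_
  rw [Finset.sum_filter]
  refine Eq.trans ?_ (key β)
  refine Finset.sum_congr rfl fun i _ => ?_
  by_cases hn : (K i).Nonempty <;> by_cases he : sSup (K i) = β <;> simp [hn, he]

open scoped Classical in
/-- The Euler characteristic is a valuation on compact convex subsets of `ℝⁿ`. By induction
applied to the slices with first coordinate `t`, the relation descends to the images under the
first coordinate, where `euler_real` applies. -/
lemma euler_pi {ι : Type*} (s : Finset ι) (c : ι → ℤ) (n : ℕ) : ∀ (K : ι → Set (Fin n → ℝ))
    (_ : ∀ i ∈ s, IsCompact (K i) ∧ Convex ℝ (K i))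
    (_ : ∀ t, ∑ i ∈ s, c i * (if t ∈ K i then 1 else 0) = 0),
    ∑ i ∈ s, c i * (if (K i).Nonempty then 1 else 0) = 0 := by
  induction n with
  | zero =>
    intro K _ h
    refine Eq.trans ?_ (h 0)
    refine Finset.sum_congr rfl fun i _ => ?_
    have : (K i).Nonempty ↔ (0 : Fin 0 → ℝ) ∈ K i :=
      ⟨fun ⟨x, hx⟩ => Subsingleton.elim x 0 ▸ hx, fun h => ⟨0, h⟩⟩
    simp [this]
  | succ n ih =>
    intro K hK h
    have h1 := euler_real s c (fun i => (fun x : Fin (n + 1) → ℝ => x 0) '' K i)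
      (fun i hi => ⟨(hK i hi).1.image (continuous_apply 0),
        (hK i hi).2.linear_image (LinearMap.proj (R := ℝ) (φ := fun _ : Fin (n+1) => ℝ) 0)⟩) ?_
    · simpa only [Set.image_nonempty] using h1
    intro t
    -- `t` lies in the image of `K i` iff the slice of `K i` over `t` is nonempty
    have h2 := ih (fun i => {z | (Fin.cons t z : Fin (n + 1) → ℝ) ∈ K i}) ?_ ?_
    · refine Eq.trans ?_ h2
      refine Finset.sum_congr rfl fun i _ => ?_
      have : t ∈ (fun x : Fin (n + 1) → ℝ => x 0) '' K i ↔
          {z | (Fin.cons t z : Fin (n + 1) → ℝ) ∈ K i}.Nonempty := by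
        constructor
        · rintro ⟨x, hx, rfl⟩
          exact ⟨Fin.tail x, by simpa [Fin.cons_self_tail] using hx⟩
        · rintro ⟨z, hz⟩
          exact ⟨_, hz, by simp⟩
      simp only [this]
    · intro i hi
      constructor
      · have : {z | (Fin.cons t z : Fin (n + 1) → ℝ) ∈ K i} =
            Fin.tail '' (K i ∩ {x | x 0 = t}) := by
          ext z
          constructor
          · intro hz
            exact ⟨_, ⟨hz, by simp⟩, by simp⟩
          · rintro ⟨x, ⟨hx, hx0⟩, rfl⟩
            simp only [Set.mem_ofPred_eq] at hx0 ⊢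
            rw [← hx0, Fin.cons_self_tail]
            exact hx
        rw [this]
        refine ((hK i hi).1.inter_right (isClosed_eq (continuous_apply 0)
          continuous_const)).image ?_
        exact continuous_pi fun j => continuous_apply j.succ
      · intro z hz w hw a b ha hb hab
        have := (hK i hi).2 hz hw ha hb hab
        simp only [Set.mem_ofPred_eq]
        convert this using 1
        funext j
        refine Fin.cases ?_ (fun j => ?_) j
        · simp [← add_mul, hab]
        · simp
    · intro z
      exact h (Fin.cons t z)

open scoped Classical in
/-- A linear relation between indicator functions of compact convex sets stays true when every
indicator is replaced by its Euler characteristic (`1` for a nonempty set, `0` for the empty one). -/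
lemma euler_relation {E ι : Type*} [NormedAddCommGroup E] [NormedSpace ℝ E] [FiniteDimensional ℝ E]
    (s : Finset ι) (c : ι → ℤ) (K : ι → Set E)
    (hK : ∀ i ∈ s, IsCompact (K i) ∧ Convex ℝ (K i))
    (h : ∀ t, ∑ i ∈ s, c i * (if t ∈ K i then 1 else 0) = 0) :
    ∑ i ∈ s, c i * (if (K i).Nonempty then 1 else 0) = 0 := by
  let e := (Module.finBasis ℝ E).equivFunL
  have h1 := euler_pi s c _ (fun i => e '' K i)
    (fun i hi => ⟨(hK i hi).1.image e.continuous, (hK i hi).2.linear_image e.toLinearMap⟩) ?_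
  · simpa only [Set.image_nonempty] using h1
  intro t
  refine Eq.trans ?_ (h (e.symm t))
  refine Finset.sum_congr rfl fun i _ => ?_
  have : t ∈ e '' K i ↔ e.symm t ∈ K i := by
    constructor
    · rintro ⟨x, hx, rfl⟩; simpa using hx
    · intro hx; exact ⟨_, hx, by simp⟩
  simp only [this]

/-! ### Faces, normal cones and tangent cones of polyhedra -/

lemma isClosed_normCone (Q F : Set V) : IsClosed (normCone Q F) := by
  have : normCone Q F = ⋂ v ∈ F, ⋂ q ∈ Q, {y : V | ⟪y, q⟫ ≤ ⟪y, v⟫} := by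
    ext y; simp [normCone]
  rw [this]
  exact isClosed_biInter fun v _ => isClosed_biInter fun q _ =>
    isClosed_le (by fun_prop) (by fun_prop)

lemma convex_normCone (Q F : Set V) : Convex ℝ (normCone Q F) := by
  intro y hy z hz a b ha hb _ v hv q hq
  simp only [inner_add_left, real_inner_smul_left]
  have := mul_le_mul_of_nonneg_left (hy v hv q hq) ha
  have := mul_le_mul_of_nonneg_left (hz v hv q hq) hb
  linarith

lemma IsPolyhedron.isClosed {P : Set V} (hP : IsPolyhedron P) : IsClosed P := by
  obtain ⟨_, s, rfl⟩ := hP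
  have : {x : V | ∀ p ∈ s, ⟪p.1, x⟫ ≤ p.2} = ⋂ p ∈ s, {x : V | ⟪p.1, x⟫ ≤ p.2} := by
    ext y; simp
  rw [this]
  exact isClosed_biInter fun p _ => isClosed_le (by fun_prop) (by fun_prop)

lemma IsPolyhedron.convex {P : Set V} (hP : IsPolyhedron P) : Convex ℝ P := by
  obtain ⟨_, s, rfl⟩ := hP
  intro y hy z hz a b ha hb hab p hp
  simp only [inner_add_right, real_inner_smul_right]
  have h1 := mul_le_mul_of_nonneg_left (hy p hp) ha
  have h2 := mul_le_mul_of_nonneg_left (hz p hp) hb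
  have : a * p.2 + b * p.2 = p.2 := by rw [← add_mul, hab, one_mul]
  linarith

lemma IsFace.convex {Q F : Set V} (hQ : Convex ℝ Q) (hF : IsFace Q F) : Convex ℝ F := by
  obtain ⟨w, _, rfl⟩ := hF
  intro y hy z hz a b ha hb hab
  refine ⟨hQ hy.1 hz.1 ha hb hab, fun q hq => ?_⟩
  simp only [inner_add_right, real_inner_smul_right]
  have h1 := mul_le_mul_of_nonneg_left (hy.2 q hq) ha
  have h2 := mul_le_mul_of_nonneg_left (hz.2 q hq) hb
  have : a * ⟪w, q⟫ + b * ⟪w, q⟫ = ⟪w, q⟫ := by rw [← add_mul, hab, one_mul]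
  linarith

/-- A convex set inside a polyhedron has a point at which every inequality that is not tight on the
whole set is strict. -/
lemma exists_generic (s : Finset (V × ℝ)) {F : Set V} (hne : F.Nonempty) (hF : Convex ℝ F)
    (hs : ∀ v ∈ F, ∀ p ∈ s, ⟪p.1, v⟫ ≤ p.2) :
    ∃ v₀ ∈ F, ∀ p ∈ s, (∃ v ∈ F, ⟪p.1, v⟫ ≠ p.2) → ⟪p.1, v₀⟫ < p.2 := by
  classical
  induction s using Finset.induction_on with
  | empty => obtain ⟨v, hv⟩ := hne; exact ⟨v, hv, by simp⟩
  | insert p s _ ih =>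
    obtain ⟨v₀, hv₀, h₀⟩ := ih fun v hv p hp => hs v hv p (Finset.mem_insert_of_mem hp)
    by_cases hp : ∃ v ∈ F, ⟪p.1, v⟫ ≠ p.2
    · obtain ⟨v, hv, hne⟩ := hp
      refine ⟨(1 / 2 : ℝ) • v₀ + (1 / 2 : ℝ) • v,
        hF hv₀ hv (by norm_num) (by norm_num) (by norm_num), ?_⟩
      intro p' hp' hex
      simp only [inner_add_right, real_inner_smul_right]
      have h1 := hs v hv p' hp'
      have h2 := hs v₀ hv₀ p' hp'
      rcases Finset.mem_insert.1 hp' with rfl | hp'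
      · have := lt_of_le_of_ne h1 hne
        linarith
      · have := h₀ p' hp' hex
        linarith
    · refine ⟨v₀, hv₀, fun p' hp' hex => ?_⟩
      rcases Finset.mem_insert.1 hp' with rfl | hp'
      · exact absurd hex hp
      · exact h₀ p' hp' hex

lemma exists_pos_step (s : Finset (V × ℝ)) {v d : V}
    (h : ∀ p ∈ s, ⟪p.1, v⟫ < p.2 ∨ (⟪p.1, v⟫ = p.2 ∧ ⟪p.1, d⟫ ≤ 0)) :
    ∃ ε : ℝ, 0 < ε ∧ ∀ p ∈ s, ⟪p.1, v + ε • d⟫ ≤ p.2 := by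
  have ev : ∀ p ∈ s, ∀ᶠ ε in nhdsWithin (0 : ℝ) (Set.Ioi 0), ⟪p.1, v + ε • d⟫ ≤ p.2 := by
    intro p hp
    rcases h p hp with h | ⟨h1, h2⟩
    · have hc : Continuous fun ε : ℝ => ⟪p.1, v + ε • d⟫ := by fun_prop
      have : (fun ε : ℝ => ⟪p.1, v + ε • d⟫) 0 < p.2 := by simpa using h
      filter_upwards [nhdsWithin_le_nhds (hc.continuousAt.eventually_lt_const this)] with ε hε
      exact hε.le
    · filter_upwards [self_mem_nhdsWithin] with ε hε
      simp only [inner_add_right, real_inner_smul_right]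
      have := mul_nonpos_of_nonneg_of_nonpos (le_of_lt hε) h2
      linarith
  obtain ⟨ε, h1, h2⟩ := (((s.eventually_all).2 ev).and self_mem_nhdsWithin).exists
  exact ⟨ε, h2, h1⟩

/-- The tangent cone of a polyhedron at a face is the polar of the normal cone. If the polar
condition holds for `d`, then moving from a generic point of the face slightly along `d` stays in
`Q`, because the defining functionals that are tight on the face lie in the normal cone. -/
lemma mem_tanCone_iff {Q F : Set V} (hQ : IsPolyhedron Q) (hF : IsFace Q F) (d : V) :
    d ∈ tanCone Q F ↔ ∀ y ∈ normCone Q F, ⟪y, d⟫ ≤ 0 := by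
  constructor
  · intro hd y hy
    refine hd {x | ⟪y, x⟫ ≤ 0} ⟨⟨by simp, ?_, ?_⟩, ?_⟩
    · exact convex_halfSpace_le (f := fun x => ⟪y, x⟫)
        ⟨fun a b => inner_add_right _ _ _, fun c a => real_inner_smul_right _ _ _⟩ 0
    · intro c hc x hx
      simp only [Set.mem_ofPred_eq, real_inner_smul_right] at hx ⊢
      exact mul_nonpos_of_nonneg_of_nonpos hc hx
    · rintro _ ⟨q, hq, v, hv, rfl⟩
      have := hy v hv q hq
      simp only [Set.mem_ofPred_eq, inner_sub_right]
      linarith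
  · intro h C hC
    have hcF := hF.convex hQ.convex
    obtain ⟨w, hne, hFe⟩ := hF
    obtain ⟨_, s, hs⟩ := hQ
    have hFQ : F ⊆ Q := by rw [hFe]; exact fun x hx => hx.1
    have hsF : ∀ v ∈ F, ∀ p ∈ s, ⟪p.1, v⟫ ≤ p.2 := by
      intro v hv
      have := hFQ hv
      rw [hs] at this
      exact this
    obtain ⟨v₀, hv₀, hgen⟩ := exists_generic s hne hcF hsF
    obtain ⟨ε, hε, hstep⟩ := exists_pos_step s (v := v₀) (d := d) (by
      intro p hp
      by_cases hex : ∃ v ∈ F, ⟪p.1, v⟫ ≠ p.2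
      · exact Or.inl (hgen p hp hex)
      · push Not at hex
        refine Or.inr ⟨hex v₀ hv₀, h p.1 fun v hv q hq => ?_⟩
        rw [hex v hv]
        rw [hs] at hq
        exact hq p hp)
    have hmem : v₀ + ε • d ∈ Q := by rw [hs]; exact hstep
    have := hC.1.2.2 ε⁻¹ (inv_nonneg.2 hε.le) _ (hC.2 ⟨_, hmem, v₀, hv₀, rfl⟩)
    simpa [smul_smul, inv_mul_cancel₀ hε.ne'] using this

/-- A face is determined by the set of defining inequalities that are tight on it. -/
lemma finite_faces {Q : Set V} (hQ : IsPolyhedron Q) : {F | IsFace Q F}.Finite := by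
  classical
  have hcQ := hQ.convex
  obtain ⟨_, s, hs⟩ := hQ
  have hsub : ∀ F F' : Set V, IsFace Q F → IsFace Q F' →
      s.filter (fun p => ∀ v ∈ F, ⟪p.1, v⟫ = p.2) = s.filter (fun p => ∀ v ∈ F', ⟪p.1, v⟫ = p.2) →
      F' ⊆ F := by
    intro F F' hF hF' he x hx
    have hcF := hF.convex hcQ
    obtain ⟨w, hne, hFe⟩ := hF
    have hFQ : F ⊆ Q := by rw [hFe]; exact fun x hx => hx.1
    have hxQ : x ∈ Q := by
      obtain ⟨w', _, rfl⟩ := hF'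
      exact hx.1
    have hsF : ∀ v ∈ F, ∀ p ∈ s, ⟪p.1, v⟫ ≤ p.2 := by
      intro v hv
      have := hFQ hv
      rw [hs] at this
      exact this
    obtain ⟨v₀, hv₀, hgen⟩ := exists_generic s hne hcF hsF
    obtain ⟨ε, hε, hstep⟩ := exists_pos_step s (v := v₀) (d := v₀ - x) (by
      -- the inequalities tight on `F` are also tight at `x`
      intro p hp
      by_cases hex : ∃ v ∈ F, ⟪p.1, v⟫ ≠ p.2
      · exact Or.inl (hgen p hp hex)
      · push Not at hex
        have hmem : p ∈ s.filter (fun p => ∀ v ∈ F, ⟪p.1, v⟫ = p.2) :=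
          Finset.mem_filter.2 ⟨hp, hex⟩
        rw [he] at hmem
        have h1 := (Finset.mem_filter.1 hmem).2 x hx
        refine Or.inr ⟨hex v₀ hv₀, ?_⟩
        rw [inner_sub_right, h1, hex v₀ hv₀, sub_self])
    have hmem : v₀ + ε • (v₀ - x) ∈ Q := by rw [hs]; exact hstep
    rw [hFe] at hv₀ ⊢
    have h1 := hv₀.2 _ hmem
    simp only [inner_add_right, real_inner_smul_right, inner_sub_right] at h1
    have h2 : ⟪w, v₀⟫ ≤ ⟪w, x⟫ := by
      by_contra hlt
      have := mul_pos hε (sub_pos.2 (not_le.1 hlt))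
      linarith
    exact ⟨hxQ, fun q hq => (hv₀.2 q hq).trans h2⟩
  refine Set.Finite.of_injOn (f := fun F : Set V => s.filter (fun p => ∀ v ∈ F, ⟪p.1, v⟫ = p.2))
    (t := (s.powerset : Set (Finset (V × ℝ)))) ?_ ?_ s.powerset.finite_toSet
  · intro F _
    exact Finset.mem_coe.2 (Finset.mem_powerset.2 (Finset.filter_subset _ _))
  · intro F hF F' hF' he
    exact Set.Subset.antisymm (hsub F' F hF' hF he.symm) (hsub F F' hF hF' he)

/-- The functionals maximised over `Q` on all of `Z` form the normal cone of a face: among these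
functionals take one, `y₀`, whose face of maximisers is minimal; adding any other one to `y₀` can
only shrink that face, hence does not change it. In particular, intersections of normal cones of
`Q` are normal cones of `Q`. -/
lemma exists_face_normCone_eq {Q Z : Set V} (hQ : IsPolyhedron Q) (hZ : Z ⊆ Q) (hne : Z.Nonempty) :
    ∃ F, IsFace Q F ∧ normCone Q F = normCone Q Z := by
  let face : V → Set V := fun y => {x | x ∈ Q ∧ ∀ q ∈ Q, ⟪y, q⟫ ≤ ⟪y, x⟫}
  have hZf : ∀ y ∈ normCone Q Z, Z ⊆ face y := fun y hy z hz => ⟨hZ hz, fun q hq => hy z hz q hq⟩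
  have hfin : (face '' normCone Q Z).Finite := (finite_faces hQ).subset (by
    rintro _ ⟨y, hy, rfl⟩
    exact ⟨y, hne.mono (hZf y hy), rfl⟩)
  have h0 : (0 : V) ∈ normCone Q Z := fun v _ q _ => by simp
  obtain ⟨_, ⟨⟨y₀, hy₀, rfl⟩, hmin⟩⟩ := hfin.exists_minimal ⟨_, Set.mem_image_of_mem _ h0⟩
  obtain ⟨z, hz⟩ := hne
  refine ⟨face y₀, ⟨y₀, ⟨z, hZf y₀ hy₀ hz⟩, rfl⟩, Set.Subset.antisymm ?_ ?_⟩
  · exact fun y hy v hv => hy v (hZf y₀ hy₀ hv)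
  · intro y hy v hv q hq
    have hsum : y₀ + y ∈ normCone Q Z := fun v hv q hq => by
      have := hy₀ v hv q hq
      have := hy v hv q hq
      simp only [inner_add_left]; linarith
    have hle : face (y₀ + y) ⊆ face y₀ := by
      intro x hx
      refine ⟨hx.1, fun q hq => ?_⟩
      have h1 := hx.2 z (hZ hz)
      have h2 := hy z hz x hx.1
      have h3 := hy₀ z hz q hq
      simp only [inner_add_left] at h1
      linarith
    have h1 := (hmin ⟨_, hsum, rfl⟩ hle hv).2 z (hZ hz)
    have h2 := hy₀ z hz v hv.1
    have h3 := hy z hz q hq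
    simp only [inner_add_left] at h1
    linarith

/-- Existence and variational characterisation of the nearest point of `P` to `x`. -/
lemma exists_proj {P : Set V} (hP : IsPolyhedron P) (x : V) :
    ∃ m ∈ P, ∀ p ∈ P, ⟪x - m, p - m⟫ ≤ 0 := by
  obtain ⟨m, hm, h⟩ := exists_norm_eq_iInf_of_complete_convex hP.1 hP.isClosed.isComplete hP.convex x
  exact ⟨m, hm, (norm_eq_iInf_iff_real_inner_le_zero hP.convex hm).1 h⟩

/-- A functional `y` bounded above on `P` attains its maximum, provided that the functionals attaining
their maximum form a closed set. If `m` is the nearest point of `P` to `p₀ + t • y`, then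
`t⁻¹ • (p₀ + t • y - m)` is maximised over `P` at `m`, and it converges to `y` as `t → ∞` because
`‖p₀ - m‖² ≤ t * (M - ⟪y, p₀⟫)`. -/
lemma max_attained {P : Set V} (hP : IsPolyhedron P)
    (hD : IsClosed {y : V | ∃ m ∈ P, ∀ p ∈ P, ⟪y, p⟫ ≤ ⟪y, m⟫}) {y : V} {M : ℝ}
    (hy : ∀ p ∈ P, ⟪y, p⟫ ≤ M) : ∃ m ∈ P, ∀ p ∈ P, ⟪y, p⟫ ≤ ⟪y, m⟫ := by
  change y ∈ {y : V | ∃ m ∈ P, ∀ p ∈ P, ⟪y, p⟫ ≤ ⟪y, m⟫}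
  rw [← hD.closure_eq, Metric.mem_closure_iff]
  intro ε hε
  obtain ⟨p₀, hp₀⟩ := hP.1
  have hC : 0 ≤ M - ⟪y, p₀⟫ := sub_nonneg.2 (hy p₀ hp₀)
  -- large enough that `(M - ⟪y, p₀⟫) / t < ε ^ 2`
  set t : ℝ := (M - ⟪y, p₀⟫) / ε ^ 2 + 1 with ht
  have htpos : 0 < t := by positivity
  have hte : M - ⟪y, p₀⟫ < t * ε ^ 2 := by
    rw [ht, add_mul, div_mul_cancel₀ _ (by positivity)]
    have : 0 < ε ^ 2 := by positivity
    linarith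
  obtain ⟨m, hm, hproj⟩ := exists_proj hP (p₀ + t • y)
  refine ⟨t⁻¹ • (p₀ + t • y - m), ⟨m, hm, fun p hp => ?_⟩, ?_⟩
  · have h1 := hproj p hp
    rw [inner_sub_right] at h1
    simp only [real_inner_smul_left]
    exact mul_le_mul_of_nonneg_left (by linarith) (inv_nonneg.2 htpos.le)
  · have h1 := hproj p₀ hp₀
    have e1 : p₀ + t • y - m = (p₀ - m) + t • y := by abel
    rw [e1, inner_add_left, real_inner_smul_left, real_inner_self_eq_norm_sq, inner_sub_right] at h1
    have e2 : y - t⁻¹ • (p₀ + t • y - m) = - (t⁻¹ • (p₀ - m)) := by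
      rw [e1, smul_add, smul_smul, inv_mul_cancel₀ htpos.ne', one_smul]; abel
    rw [dist_eq_norm, e2, norm_neg, norm_smul, norm_inv, Real.norm_of_nonneg htpos.le,
      inv_mul_lt_iff₀ htpos]
    refine lt_of_pow_lt_pow_left₀ 2 (by positivity) ?_
    have h2 : t * (⟪y, m⟫ - ⟪y, p₀⟫) ≤ t * (M - ⟪y, p₀⟫) :=
      mul_le_mul_of_nonneg_left (by linarith [hy m hm]) htpos.le
    have h3 : t * (M - ⟪y, p₀⟫) < t * (t * ε ^ 2) := mul_lt_mul_of_pos_left hte htpos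
    nlinarith

/-! ### Inclusion-exclusion over the normal fan -/

open scoped Classical in
/-- If finitely many normal cones cover a convex set `U`, the alternating sum over all subfamilies
`T` of `[⋂ T meets U]` vanishes; the summand of `T = ∅` is `[U ≠ ∅]`. The set `U` is replaced by the
convex hull of one point from each nonempty `⋂ T ∩ U`, which makes `euler_relation` applicable to
the inclusion-exclusion identity. -/
lemma euler_cover (S : Finset (Set V)) (Q U : Set V) (hU : Convex ℝ U)
    (hcov : ∀ y ∈ U, ∃ G ∈ S, y ∈ normCone Q G) :
    ∑ T ∈ S.powerset, (-1 : ℤ) ^ T.card *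
      (if (normCone Q (⋃ G ∈ T, G) ∩ U).Nonempty then 1 else 0) = 0 := by
  let σ : Finset (Set V) → Set V := fun T => normCone Q (⋃ G ∈ T, G)
  have hσ : ∀ T y, y ∈ σ T ↔ ∀ G ∈ T, y ∈ normCone Q G := by
    intro T y
    constructor
    · intro h G hG v hv
      exact h v (Set.mem_biUnion hG hv)
    · intro h v hv
      obtain ⟨G, hG, hv⟩ := Set.mem_iUnion₂.1 hv
      exact h G hG v hv
  have hpt : ∀ T, ∃ y : V, (σ T ∩ U).Nonempty → y ∈ σ T ∩ U := by
    intro T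
    by_cases h : (σ T ∩ U).Nonempty
    · exact ⟨h.some, fun _ => h.some_mem⟩
    · exact ⟨0, fun h' => absurd h' h⟩
  choose pt hpt using hpt
  let A : Set V := pt '' {T | T ∈ S.powerset ∧ (σ T ∩ U).Nonempty}
  have hAfin : A.Finite := (S.powerset.finite_toSet.subset fun T hT => hT.1).image _
  have hAU : convexHull ℝ A ⊆ U := by
    refine convexHull_min ?_ hU
    rintro _ ⟨T, hT, rfl⟩
    exact (hpt T hT.2).2
  have key := euler_relation S.powerset (fun T => (-1 : ℤ) ^ T.card)
    (fun T => σ T ∩ convexHull ℝ A) ?_ ?_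
  · refine Eq.trans (Finset.sum_congr rfl fun T hT => ?_) key
    have : (normCone Q (⋃ G ∈ T, G) ∩ U).Nonempty ↔ (σ T ∩ convexHull ℝ A).Nonempty := by
      constructor
      · intro h
        exact ⟨pt T, (hpt T h).1, subset_convexHull ℝ A ⟨T, ⟨hT, h⟩, rfl⟩⟩
      · rintro ⟨y, hy, hyA⟩
        exact ⟨y, hy, hAU hyA⟩
    simp only [this]
  · intro T _
    exact ⟨(hAfin.isCompact_convexHull ℝ).inter_left (isClosed_normCone _ _),
      (convex_normCone _ _).inter (convex_convexHull ℝ A)⟩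
  · intro y
    by_cases hy : y ∈ convexHull ℝ A
    · have h1 : ∀ T ∈ S.powerset, (-1 : ℤ) ^ T.card *
          (if y ∈ σ T ∩ convexHull ℝ A then 1 else 0) =
          if T ⊆ S.filter (fun G => y ∈ normCone Q G) then (-1 : ℤ) ^ T.card else 0 := by
        intro T hT
        have : y ∈ σ T ∩ convexHull ℝ A ↔ T ⊆ S.filter (fun G => y ∈ normCone Q G) := by
          constructor
          · intro h G hG
            exact Finset.mem_filter.2 ⟨Finset.mem_powerset.1 hT hG, (hσ T y).1 h.1 G hG⟩
          · intro h
            exact ⟨(hσ T y).2 fun G hG => (Finset.mem_filter.1 (h hG)).2, hy⟩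
        simp only [this, mul_ite, mul_one, mul_zero]
      refine Eq.trans (Finset.sum_congr rfl fun T hT => (by convert h1 T hT)) ?_
      rw [← Finset.sum_filter]
      have h2 : S.powerset.filter (fun T => T ⊆ S.filter (fun G => y ∈ normCone Q G)) =
          (S.filter (fun G => y ∈ normCone Q G)).powerset := by
        ext T
        simp only [Finset.mem_filter, Finset.mem_powerset]
        exact ⟨fun h => h.2, fun h => ⟨h.trans (Finset.filter_subset _ _), h⟩⟩
      rw [h2, Finset.sum_powerset_neg_one_pow_card, if_neg]
      obtain ⟨G, hG, hyG⟩ := hcov y (hAU hy)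
      exact Finset.ne_empty_of_mem (Finset.mem_filter.2 ⟨hG, hyG⟩)
    · refine Finset.sum_eq_zero fun T _ => ?_
      rw [if_neg fun h => hy h.2, mul_zero]

/-- for any extended deformation `P` of a polyhedron `Q`, the indicator
function of `P` is a finite `ℤ`-linear combination of indicator functions of translates
of tangent cones of `Q`. -/
theorem indicator_combination_of_tangent_cones (Q : Set V) (hQ : IsPolyhedron Q)
    (P : Set V) (hP : IsExtDef Q P) :
    ∃ (k : ℕ) (a : Fin k → ℤ) (F : Fin k → Set V) (v : Fin k → V),
      (∀ i, IsFace Q (F i)) ∧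
      indic P = ∑ i, a i • indic (transl (v i) (tanCone Q (F i))) := by
  classical
  obtain ⟨hPp, hdef⟩ := hP
  have hSfin : {G | IsFace Q G ∧ ∃ m ∈ P, normCone Q G ⊆ normCone P {m}}.Finite :=
    (finite_faces hQ).subset fun G hG => hG.1
  -- the cones of the normal fan of `Q` on which the support function of `P` is linear
  set S : Finset (Set V) := hSfin.toFinset with hSdef
  have hS : ∀ G, G ∈ S ↔ IsFace Q G ∧ ∃ m ∈ P, normCone Q G ⊆ normCone P {m} := by
    intro G; simp [hSdef]
  -- they cover exactly the domain of the support function of `P`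
  have hcov : ∀ y : V, (∃ m ∈ P, ∀ p ∈ P, ⟪y, p⟫ ≤ ⟪y, m⟫) ↔ ∃ G ∈ S, y ∈ normCone Q G := by
    intro y
    constructor
    · rintro ⟨m, hm, hmax⟩
      obtain ⟨𝒢, h𝒢, he⟩ := hdef {x | x ∈ P ∧ ∀ q ∈ P, ⟪y, q⟫ ≤ ⟪y, x⟫}
        ⟨y, ⟨m, hm, hmax⟩, rfl⟩
      have hy : y ∈ ⋃ G ∈ 𝒢, normCone Q G := by
        rw [← he]
        exact fun v hv q hq => hv.2 q hq
      obtain ⟨G, hG, hyG⟩ := Set.mem_iUnion₂.1 hy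
      refine ⟨G, (hS G).2 ⟨h𝒢 G hG, m, hm, fun z hz => ?_⟩, hyG⟩
      have hz' : z ∈ ⋃ G ∈ 𝒢, normCone Q G := Set.mem_biUnion hG hz
      rw [← he] at hz'
      rintro v rfl
      exact hz' v ⟨hm, hmax⟩
    · rintro ⟨G, hG, hy⟩
      obtain ⟨_, m, hm, hsub⟩ := (hS G).1 hG
      exact ⟨m, hm, fun p hp => hsub hy m rfl p hp⟩
  have hclosed : IsClosed {y : V | ∃ m ∈ P, ∀ p ∈ P, ⟪y, p⟫ ≤ ⟪y, m⟫} := by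
    have : {y : V | ∃ m ∈ P, ∀ p ∈ P, ⟪y, p⟫ ≤ ⟪y, m⟫} = ⋃ G ∈ (S : Set (Set V)), normCone Q G := by
      ext y
      simpa using hcov y
    rw [this]
    exact S.finite_toSet.isClosed_biUnion fun G _ => isClosed_normCone Q G
  have hSne : S ≠ ∅ := by
    obtain ⟨m, hm⟩ := hPp.1
    obtain ⟨G, hG, _⟩ := (hcov 0).1 ⟨m, hm, by simp⟩
    exact Finset.ne_empty_of_mem hG
  -- `v` is a point of `P` at which every functional in `⋂ T` is maximal
  have hdata : ∀ T : Finset (Set V), ∃ (F : Set V) (v : V), T ∈ S.powerset.erase ∅ →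
      IsFace Q F ∧ normCone Q F = normCone Q (⋃ G ∈ T, G) ∧ v ∈ P ∧
        normCone Q F ⊆ normCone P {v} := by
    intro T
    by_cases hT : T ∈ S.powerset.erase ∅
    · obtain ⟨hne, hTS⟩ := Finset.mem_erase.1 hT
      rw [Finset.mem_powerset] at hTS
      obtain ⟨G₀, hG₀⟩ := Finset.nonempty_iff_ne_empty.2 hne
      obtain ⟨hface₀, m, hm, hsub⟩ := (hS G₀).1 (hTS hG₀)
      obtain ⟨F, hF, hFe⟩ := exists_face_normCone_eq hQ (Z := ⋃ G ∈ T, G) (by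
          refine Set.iUnion₂_subset fun G hG => ?_
          obtain ⟨w, _, hGe⟩ := ((hS G).1 (hTS hG)).1
          rw [hGe]
          exact fun x hx => hx.1) (by
          obtain ⟨w, ⟨x, hx⟩, _⟩ := hface₀
          exact ⟨x, Set.mem_biUnion hG₀ hx⟩)
      refine ⟨F, m, fun _ => ⟨hF, hFe, hm, ?_⟩⟩
      rw [hFe]
      exact fun y hy => hsub fun v hv => hy v (Set.mem_biUnion hG₀ hv)
    · exact ⟨∅, 0, fun h => absurd h hT⟩
  choose F v hFv using hdata
  have main : indic P = ∑ T ∈ S.powerset.erase ∅,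
      (-(-1 : ℤ) ^ T.card) • indic (transl (v T) (tanCone Q (F T))) := by
    funext x
    -- The functionals separating `x` strictly from `P`.
    let U : Set V := {y | ∃ c, c < ⟪y, x⟫ ∧ ∀ p ∈ P, ⟪y, p⟫ ≤ c}
    have hUconv : Convex ℝ U := by
      rintro y ⟨c, hc, hy⟩ z ⟨d, hd, hz⟩ a b ha hb hab
      refine ⟨a * c + b * d, ?_, fun p hp => ?_⟩
      · simp only [inner_add_left, real_inner_smul_left]
        rcases ha.eq_or_lt with rfl | ha
        · have : b = 1 := by linarith
          subst this; linarith
        · have := mul_lt_mul_of_pos_left hc ha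
          have := mul_le_mul_of_nonneg_left hd.le hb
          linarith
      · simp only [inner_add_left, real_inner_smul_left]
        have := mul_le_mul_of_nonneg_left (hy p hp) ha
        have := mul_le_mul_of_nonneg_left (hz p hp) hb
        linarith
    have hPx : x ∈ P ↔ ¬ U.Nonempty := by
      constructor
      · rintro hx ⟨y, c, hc, hy⟩
        exact absurd (hy x hx) (not_le.2 hc)
      · intro hU
        by_contra hx
        obtain ⟨m, hm, hproj⟩ := exists_proj hPp x
        refine hU ⟨x - m, ⟪x - m, m⟫, ?_, fun p hp => ?_⟩
        · have : 0 < ⟪x - m, x - m⟫ := real_inner_self_pos.2 fun h => hx (by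
            rw [sub_eq_zero] at h
            rwa [h])
          rw [inner_sub_right] at this
          linarith
        · have := hproj p hp
          rw [inner_sub_right] at this
          linarith
    have hTx : ∀ T ∈ S.powerset.erase ∅, x ∈ transl (v T) (tanCone Q (F T)) ↔
        ¬ (normCone Q (⋃ G ∈ T, G) ∩ U).Nonempty := by
      intro T hT
      obtain ⟨hF, hFe, hvP, hsub⟩ := hFv T hT
      have h1 : x ∈ transl (v T) (tanCone Q (F T)) ↔ x - v T ∈ tanCone Q (F T) := by
        constructor
        · rintro ⟨d, hd, rfl⟩
          simpa using hd
        · intro h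
          exact ⟨_, h, by simp⟩
      rw [h1, mem_tanCone_iff hQ hF, ← hFe]
      constructor
      · rintro h ⟨y, hy, c, hc, hyP⟩
        have h2 := h y hy
        have h3 := hyP _ hvP
        rw [inner_sub_right] at h2
        linarith
      · intro h y hy
        by_contra hlt
        refine h ⟨y, hy, ⟪y, v T⟫, ?_, fun p hp => hsub hy _ rfl p hp⟩
        rw [inner_sub_right] at hlt
        linarith
    have heuler := euler_cover S Q U hUconv (by
      rintro y ⟨c, _, hy⟩
      exact (hcov y).1 (max_attained hPp hclosed hy))
    have hcount : ∑ T ∈ S.powerset, (-1 : ℤ) ^ T.card = 0 := by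
      rw [Finset.sum_powerset_neg_one_pow_card, if_neg hSne]
    rw [← Finset.add_sum_erase _ _ (Finset.empty_mem_powerset S)] at heuler hcount
    have hU0 : normCone Q (⋃ G ∈ (∅ : Finset (Set V)), G) ∩ U = U := by
      simp [normCone]
    rw [hU0] at heuler
    simp only [Finset.card_empty, pow_zero, one_mul] at heuler hcount
    have hsum : ∑ T ∈ S.powerset.erase ∅,
        (-(-1 : ℤ) ^ T.card) * indic (transl (v T) (tanCone Q (F T))) x =
        ∑ T ∈ S.powerset.erase ∅, ((-1 : ℤ) ^ T.card *
          (if (normCone Q (⋃ G ∈ T, G) ∩ U).Nonempty then 1 else 0) - (-1 : ℤ) ^ T.card) := by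
      refine Finset.sum_congr rfl fun T hT => ?_
      have := hTx T hT
      by_cases h : (normCone Q (⋃ G ∈ T, G) ∩ U).Nonempty
      · simp [indic, this, h]
      · simp [indic, this, h]
    rw [Finset.sum_apply]
    simp only [Pi.smul_apply, smul_eq_mul]
    rw [hsum, Finset.sum_sub_distrib]
    have hP1 : indic P x = 1 - (if U.Nonempty then 1 else 0) := by
      by_cases h : U.Nonempty <;> simp [indic, hPx, h]
    rw [hP1]
    linarith
  let e := (S.powerset.erase ∅).equivFin.symm
  refine ⟨_, fun i => -(-1 : ℤ) ^ (e i).1.card, fun i => F (e i).1, fun i => v (e i).1,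
    fun i => (hFv _ (e i).2).1, ?_⟩
  rw [main, ← Finset.sum_coe_sort]
  exact (Equiv.sum_comp e fun T =>
    (-(-1 : ℤ) ^ T.1.card) • indic (transl (v T.1) (tanCone Q (F T.1)))).symm
end

section
/- Let C ⊆ V be a convex cone and P ⊆ V a nonempty set. If C + v and C + v' both tightly contain P for some v, v' ∈ V, then v − v' ∈ lineal(C); in particular C + v = C + v', so P is tightly contained in at most one translate of C. -/
/-!
A convex cone `C` is closed under addition. If `p ∈ P` is a point of `v + lineal C`, then
`p = v + l = v' + c` with `-l, c ∈ C`, so `v - v' = c + (-l) ∈ C`. Exchanging the roles of `v`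
and `v'` gives `v' - v ∈ C`, hence `v - v' ∈ lineal C`, and each of the two translates of `C`
contains the other.
-/

open RealInnerProductSpace

variable {V : Type*} [NormedAddCommGroup V] [InnerProductSpace ℝ V] [FiniteDimensional ℝ V]

theorem IsConvexCone.add_mem' {C : Set V} (hC : IsConvexCone C) {x y : V}
    (hx : x ∈ C) (hy : y ∈ C) : x + y ∈ C := by
  -- `x + y` is twice the midpoint of `x` and `y`.
  have h := hC.2.2 2 (by norm_num) _
    (hC.2.1 hx hy (by norm_num : (0 : ℝ) ≤ 1 / 2) (by norm_num : (0 : ℝ) ≤ 1 / 2) (by norm_num))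
  simpa [smul_smul] using h

/-- A point of `P` in `v + lineal C` also lies in `v' + C`; comparing the two expressions for it
gives `v - v' ∈ C`. -/
theorem TightContains.sub_mem {C : Set V} (hC : IsConvexCone C) {P : Set V} {v v' : V}
    (h : TightContains C v P) (h' : P ⊆ transl v' C) : v - v' ∈ C := by
  obtain ⟨_, hp, l, hl, rfl⟩ := h.2
  obtain ⟨c, hc, hcl⟩ := h' hp
  have e : v - v' = c + -l := by
    simp only at hcl
    rw [← sub_eq_iff_eq_add.mpr hcl.symm]
    abel
  rw [e]
  exact hC.add_mem' hc hl.2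

theorem transl_subset_of_sub_mem {C : Set V} (hC : IsConvexCone C) {v v' : V}
    (h : v - v' ∈ C) : transl v C ⊆ transl v' C := by
  rintro _ ⟨c, hc, rfl⟩
  exact ⟨(v - v') + c, hC.add_mem' h hc, by simp only; abel⟩

/-- a nonempty set is tightly contained in at most one translate of a
given convex cone. -/
theorem tight_containment_unique_translate (C : Set V) (hC : IsConvexCone C)
    (P : Set V) (hP : P.Nonempty) (v v' : V)
    (h : TightContains C v P) (h' : TightContains C v' P) :
    v - v' ∈ lineal C ∧ transl v C = transl v' C := by
  have h₁ : v - v' ∈ C := h.sub_mem hC h'.1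
  have h₂ : v' - v ∈ C := h'.sub_mem hC h.1
  refine ⟨⟨h₁, ?_⟩, (transl_subset_of_sub_mem hC h₁).antisymm (transl_subset_of_sub_mem hC h₂)⟩
  rwa [Set.mem_neg, neg_sub]
end
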